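/- Let 0 < θ < β₁ < γ₁ < π/2, and let f : Δ_{γ₁} → ℂ be holomorphic and bounded with |f(z)| ≤ c|z|^s for some constants c, s > 0, where Δ_{γ₁} = 1 - B_{γ₁} is the reflected Stolz domain. Let Γ₁ be the contour consisting of the two line segments from cos(β₁)e^{iβ₁} to 0 and from 0 to cos(β₁)e^{-iβ₁}, and Γ₂ the counterclockwise circular arc from cos(β₁)e^{-iβ₁} to cos(β₁)e^{iβ₁} along the circle of center 1 and radius sin β₁. Define F_j(z) = (1/2πi)∫_{Γ_j} f(λ)/(λ - z) dλ for j = 1,2, and g(z) = F₁(z) + F₂(0)/(1+z). Then g is holomorphic on the sector Σ_θ, there exist constants c₂, s' > 0 with |g(z)| ≤ c₂ |z|^{s'}/(1+|z|^{2s'}) for all z ∈ Σ_θ, and ‖g‖_{∞,Σ_θ} ≤ C ‖f‖_{∞,Δ_{γ₁}} for a constant C independent of f. -/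

import Mathlib

open Complex MeasureTheory intervalIntegral Real

/-- The Stolz domain of angle `γ`. -/
def stolzDomain (γ : ℝ) : Set ℂ :=
  interior (convexHull ℝ ({1} ∪ Metric.closedBall (0:ℂ) (Real.sin γ)))

/-- The reflected Stolz domain `Δ_γ = 1 - B_γ`. -/
def reflStolz (γ : ℝ) : Set ℂ := (fun z => 1 - z) '' stolzDomain γ

/-- The open sector of half-angle `θ`. -/
def sector (θ : ℝ) : Set ℂ := {z : ℂ | z ≠ 0 ∧ |z.arg| < θ}

/-- Cauchy-type integral of `f` along the straight segment from `a` to `b`,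
evaluated at `z`. -/
noncomputable def segCauchy (f : ℂ → ℂ) (a b z : ℂ) : ℂ :=
  ∫ t in (0:ℝ)..1, f ((1 - (t:ℂ)) * a + (t:ℂ) * b) /
    (((1 - (t:ℂ)) * a + (t:ℂ) * b) - z) * (b - a)

/-- `F₁(z)`: Cauchy integral along the contour `Γ₁` consisting of the segments from
`cos β · e^{iβ}` to `0` and from `0` to `cos β · e^{-iβ}`. -/
noncomputable def F₁ (β : ℝ) (f : ℂ → ℂ) (z : ℂ) : ℂ :=
  (1 / (2 * Real.pi * I)) *
    (segCauchy f ((Real.cos β : ℂ) * Complex.exp (I * β)) 0 z +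
     segCauchy f 0 ((Real.cos β : ℂ) * Complex.exp (-(I * β))) z)

/-- `F₂(z)`: Cauchy integral along the counterclockwise arc `Γ₂` from
`cos β · e^{-iβ}` to `cos β · e^{iβ}` on the circle of centre `1` and radius `sin β`. -/
noncomputable def F₂ (β : ℝ) (f : ℂ → ℂ) (z : ℂ) : ℂ :=
  (1 / (2 * Real.pi * I)) *
    ∫ t in -(Real.pi / 2 + β)..(Real.pi / 2 + β),
      f (1 + (Real.sin β : ℂ) * Complex.exp (I * t)) /
        ((1 + (Real.sin β : ℂ) * Complex.exp (I * t)) - z) *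
        (I * (Real.sin β : ℂ) * Complex.exp (I * t))

/-- The auxiliary function `g(z) = F₁(z) + F₂(0)/(1+z)`. -/
noncomputable def gAux (β : ℝ) (f : ℂ → ℂ) (z : ℂ) : ℂ :=
  F₁ β f z + F₂ β f 0 / (1 + z)


lemma refl_eq (γ : ℝ) : reflStolz γ = (fun z => 1 - z) ⁻¹' stolzDomain γ := by
  ext z
  constructor
  · rintro ⟨w, hw, rfl⟩
    simpa using hw
  · intro h
    exact ⟨1 - z, h, by simp⟩

lemma refl_open (γ : ℝ) : IsOpen (reflStolz γ) := by
  rw [refl_eq]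
  exact isOpen_interior.preimage (by fun_prop)

lemma refl_convex (γ : ℝ) : Convex ℝ (reflStolz γ) := by
  rw [refl_eq]
  have h : Convex ℝ (stolzDomain γ) := (convex_convexHull ℝ _).interior
  intro x hx y hy a b ha hb hab
  have := h hx hy ha hb hab
  simp only [Set.mem_preimage] at *
  convert this using 1
  simp only [Complex.real_smul]
  have : (a:ℂ) + b = 1 := by exact_mod_cast hab
  linear_combination -this

lemma refl_re {γ : ℝ} {z : ℂ} (hz : z ∈ reflStolz γ) : 0 < z.re := by
  rw [refl_eq] at hz
  have hs : convexHull ℝ ({1} ∪ Metric.closedBall (0:ℂ) (Real.sin γ)) ⊆ {z : ℂ | z.re ≤ 1} := by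
    apply convexHull_min
    · rintro x (hx | hx)
      · simp at hx; simp [hx]
      · simp at hx
        exact ((Complex.re_le_norm x).trans hx).trans (Real.sin_le_one _)
    · exact convex_halfSpace_re_le 1
  have := interior_mono hs hz
  have h2 : (1 - z) ∈ {z : ℂ | z.re < 1} := by
    rw [← interior_setOfPred_re_le]; exact this
  simp at h2
  exact h2

lemma refl_ball {γ : ℝ} {z : ℂ} (hz : ‖1 - z‖ < Real.sin γ) : z ∈ reflStolz γ := by
  rw [refl_eq]
  have : Metric.ball (0:ℂ) (Real.sin γ) ⊆ stolzDomain γ := by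
    apply interior_maximal _ Metric.isOpen_ball
    exact Metric.ball_subset_closedBall.trans (Set.subset_union_right.trans (subset_convexHull ℝ _))
  apply this
  simpa using hz

lemma refl_ray {γ : ℝ} {z : ℂ} (hz : z ∈ reflStolz γ) {t : ℝ} (ht : t ∈ Set.Ioc (0:ℝ) 1) :
    (t:ℂ) * z ∈ reflStolz γ := by
  rw [refl_eq] at hz ⊢
  have h1 : (1:ℂ) ∈ convexHull ℝ ({1} ∪ Metric.closedBall (0:ℂ) (Real.sin γ)) :=
    subset_convexHull ℝ _ (Or.inl rfl)
  have := (convex_convexHull ℝ ({1} ∪ Metric.closedBall (0:ℂ) (Real.sin γ))).combo_self_interior_mem_interior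
    h1 hz (a := 1 - t) (b := t) (by linarith [ht.2]) ht.1 (by ring)
  change 1 - (t:ℂ) * z ∈ interior _
  convert this using 1
  simp only [Complex.real_smul]
  push_cast
  ring

lemma sin_sub_bound {θ β a : ℝ} (h1 : 0 < θ) (h2 : θ < β) (h4 : β < Real.pi / 2) (ha : |a| < θ) :
    Real.sin (β - θ) ≤ Real.sin (β - a) := by
  obtain ⟨h5, h6⟩ := abs_lt.1 ha
  by_cases h : β - a ≤ Real.pi / 2
  · exact Real.sin_le_sin_of_le_of_le_pi_div_two (by linarith) h (by linarith)
  · rw [← Real.sin_pi_sub (β - a)]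
    exact Real.sin_le_sin_of_le_of_le_pi_div_two (by linarith) (by linarith) (by linarith)

lemma im_bound (r b : ℝ) (z : ℂ) :
    |‖z‖ * Real.sin (z.arg - b)| ≤ ‖(r:ℂ) * Complex.exp (I * b) - z‖ := by
  have h : ‖(r:ℂ) * Complex.exp (I * b) - z‖ = ‖((r:ℂ) * Complex.exp (I * b) - z) * Complex.exp (((-b : ℝ) : ℂ) * I)‖ := by
    rw [norm_mul, Complex.norm_exp_ofReal_mul_I, mul_one]
  rw [h]
  refine le_trans (le_of_eq ?_) (Complex.abs_im_le_norm _)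
  rw [← abs_neg]
  congr 1
  have hz : z = ‖z‖ * Complex.exp (z.arg * I) := (Complex.norm_mul_exp_arg_mul_I z).symm
  have : ((r:ℂ) * Complex.exp (I * b) - z) * Complex.exp (((-b : ℝ) : ℂ) * I)
     = (r : ℂ) - ‖z‖ * Complex.exp (((z.arg - b : ℝ) : ℂ) * I) := by
    conv_lhs => rw [hz]
    rw [sub_mul, mul_assoc, ← Complex.exp_add, mul_assoc, ← Complex.exp_add]
    push_cast
    ring_nf
    simp
  rw [this, Complex.sub_im, Complex.im_ofReal_mul, Complex.exp_ofReal_mul_I_im]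
  simp

/-- the constant -/
lemma k_of_sigma {σ R t : ℝ} {p z : ℂ} (hσ : 0 < σ) (hR : 0 < R) (hp : ‖p‖ = R) (ht : 0 ≤ t)
    (h : σ * ‖z‖ ≤ ‖(t:ℂ) * p - z‖) :
    ((1 + 1/σ)/R + 1/σ)⁻¹ * (t + ‖z‖) ≤ ‖(t:ℂ) * p - z‖ := by
  have hk : 0 < (1 + 1/σ)/R + 1/σ := by positivity
  rw [inv_mul_le_iff₀ hk]
  have h1 : t * R ≤ ‖(t:ℂ) * p - z‖ + ‖z‖ := by
    have : ‖(t:ℂ) * p‖ = t * R := by rw [norm_mul, hp, Complex.norm_real, Real.norm_of_nonneg ht]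
    rw [← this]
    exact norm_le_norm_sub_add _ _
  have h2 : ‖z‖ ≤ ‖(t:ℂ) * p - z‖ / σ := by rw [le_div_iff₀ hσ]; linarith
  have h3 : t ≤ (‖(t:ℂ) * p - z‖ + ‖(t:ℂ) * p - z‖ / σ) / R := by
    rw [le_div_iff₀ hR]; linarith
  calc t + ‖z‖ ≤ (‖(t:ℂ) * p - z‖ + ‖(t:ℂ) * p - z‖ / σ) / R + ‖(t:ℂ) * p - z‖ / σ := add_le_add h3 h2
    _ = _ := by ring

/-- ray integral -/
noncomputable def rayI (f : ℂ → ℂ) (p z : ℂ) : ℂ :=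
  ∫ t in (0:ℝ)..1, f ((t:ℂ) * p) / ((t:ℂ) * p - z) * p

lemma F1_eq (β : ℝ) (f : ℂ → ℂ) (z : ℂ) : F₁ β f z = (1 / (2 * Real.pi * I)) *
    (rayI f ((Real.cos β : ℂ) * Complex.exp (-(I * β))) z
      - rayI f ((Real.cos β : ℂ) * Complex.exp (I * β)) z) := by
  unfold F₁
  congr 1
  have h1 : ∀ p, segCauchy f 0 p z = rayI f p z := by
    intro p
    unfold segCauchy rayI
    simp
  have h2 : ∀ p, segCauchy f p 0 z = - rayI f p z := by
    intro p
    unfold segCauchy rayI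
    have := intervalIntegral.integral_comp_sub_left (a := 0) (b := 1)
      (fun t : ℝ => f ((t:ℂ) * p) / ((t:ℂ) * p - z) * p) 1
    simp only [sub_self, sub_zero] at this
    rw [← this, ← intervalIntegral.integral_neg]
    congr 1
    ext t
    push_cast
    simp
  rw [h1, h2]
  ring

/-- Data along a ray. -/
structure RayData (f : ℂ → ℂ) (p : ℂ) (c s : ℝ) : Prop where
  cont : ContinuousOn (fun t : ℝ => f ((t:ℂ) * p)) (Set.Ioc 0 1)
  bd : ∀ t ∈ Set.Ioc (0:ℝ) 1, ‖f ((t:ℂ) * p)‖ ≤ c * t ^ s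
  hp : ‖p‖ ≤ 1
  hc : 0 < c
  hs : 0 < s

/-- nondegeneracy -/
def Good (k : ℝ) (p z : ℂ) : Prop := ∀ t ∈ Set.Ioc (0:ℝ) 1, k * (t + ‖z‖) ≤ ‖(t:ℂ) * p - z‖

section
variable {f : ℂ → ℂ} {p z : ℂ} {c s k : ℝ}

lemma Good.pos (hg : Good k p z) (hk : 0 < k) {t : ℝ} (ht : t ∈ Set.Ioc (0:ℝ) 1) :
    0 < ‖(t:ℂ) * p - z‖ :=
  lt_of_lt_of_le (mul_pos hk (add_pos_of_pos_of_nonneg ht.1 (norm_nonneg _))) (hg t ht)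

lemma Good.ne (hg : Good k p z) (hk : 0 < k) {t : ℝ} (ht : t ∈ Set.Ioc (0:ℝ) 1) :
    (t:ℂ) * p - z ≠ 0 := norm_pos_iff.1 (hg.pos hk ht)

lemma RayData.contq (hd : RayData f p c s) (hg : Good k p z) (hk : 0 < k) :
    ContinuousOn (fun t : ℝ => f ((t:ℂ) * p) / ((t:ℂ) * p - z) * p) (Set.Ioc 0 1) := by
  refine (hd.cont.div ?_ ?_).mul continuousOn_const
  · exact Continuous.continuousOn (by fun_prop)
  · intro t ht
    exact hg.ne hk ht

lemma RayData.aux (hd : RayData f p c s) (hg : Good k p z) (hk : 0 < k) {A : ℝ} {t : ℝ}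
    (ht : t ∈ Set.Ioc (0:ℝ) 1) (hA : ‖f ((t:ℂ) * p)‖ ≤ A) :
    ‖f ((t:ℂ) * p) / ((t:ℂ) * p - z) * p‖ ≤ A / (k * (t + ‖z‖)) := by
  have h0 : 0 < k * (t + ‖z‖) := mul_pos hk (add_pos_of_pos_of_nonneg ht.1 (norm_nonneg _))
  have hA0 : 0 ≤ A := (norm_nonneg _).trans hA
  rw [norm_mul, norm_div]
  calc _ ≤ ‖f ((t:ℂ) * p)‖ / ‖(t:ℂ) * p - z‖ * 1 := by
        gcongr
        exact hd.hp
    _ ≤ A / (k * (t + ‖z‖)) := by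
        rw [mul_one]
        gcongr
        exact hg t ht

lemma RayData.int (hd : RayData f p c s) (hg : Good k p z) (hk : 0 < k) :
    IntervalIntegrable (fun t : ℝ => f ((t:ℂ) * p) / ((t:ℂ) * p - z) * p) volume 0 1 := by
  have hb : IntervalIntegrable (fun t : ℝ => c / k * t ^ (s - 1)) volume 0 1 :=
    (intervalIntegral.intervalIntegrable_rpow' (by linarith [hd.hs])).const_mul _
  refine hb.mono_fun' ?_ ?_
  · rw [Set.uIoc_of_le zero_le_one]
    exact (hd.contq hg hk).aestronglyMeasurable measurableSet_Ioc
  · rw [Set.uIoc_of_le zero_le_one]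
    refine (ae_restrict_iff' measurableSet_Ioc).2 (Filter.Eventually.of_forall fun t ht => ?_)
    refine (hd.aux hg hk ht (hd.bd t ht)).trans ?_
    have ht0 := ht.1
    have := hd.hc
    beta_reduce
    rw [Real.rpow_sub_one ht0.ne']
    calc c * t ^ s / (k * (t + ‖z‖)) ≤ c * t ^ s / (k * t) := by
          gcongr
          linarith [norm_nonneg z]
      _ = _ := by field_simp

lemma RayData.large (hd : RayData f p c s) (hg : Good k p z) (hk : 0 < k) (hz : z ≠ 0) :
    ‖rayI f p z‖ ≤ c / (k * ‖z‖) := by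
  have hz' : 0 < ‖z‖ := norm_pos_iff.2 hz
  have := intervalIntegral.norm_integral_le_of_norm_le_const (a := 0) (b := 1)
    (f := fun t : ℝ => f ((t:ℂ) * p) / ((t:ℂ) * p - z) * p) (C := c / (k * ‖z‖)) ?_
  · simpa [rayI] using this
  · intro t ht
    rw [Set.uIoc_of_le zero_le_one] at ht
    have h := hd.hc
    have ht0 := ht.1
    have hA : ‖f ((t:ℂ) * p)‖ ≤ c := (hd.bd t ht).trans
      (mul_le_of_le_one_right h.le (Real.rpow_le_one ht.1.le ht.2 hd.hs.le))
    refine (hd.aux hg hk ht hA).trans ?_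
    gcongr
    linarith

lemma RayData.diff_eq (hd : RayData f p c s) (hg : Good k p z) (hk : 0 < k) {w : ℂ}
    (hw : Good k p w) : rayI f p z - rayI f p w =
      ∫ t in (0:ℝ)..1, (f ((t:ℂ) * p) / ((t:ℂ) * p - z) * p) * ((z - w) / ((t:ℂ) * p - w)) := by
  unfold rayI
  rw [← intervalIntegral.integral_sub (hd.int hg hk) (hd.int hw hk)]
  apply intervalIntegral.integral_congr_ae
  refine Filter.Eventually.of_forall fun t ht => ?_
  rw [Set.uIoc_of_le zero_le_one] at ht
  have h1 := hg.ne hk ht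
  have h2 := hw.ne hk ht
  field_simp
  ring

lemma int_inv_sq {ρ : ℝ} (hρ : 0 < ρ) :
    IntervalIntegrable (fun t : ℝ => ((t + ρ) ^ 2)⁻¹) volume 0 1 ∧
    ∫ t in (0:ℝ)..1, ((t + ρ) ^ 2)⁻¹ ≤ 1 / ρ := by
  have hi : IntervalIntegrable (fun t : ℝ => ((t + ρ) ^ 2)⁻¹) volume 0 1 := by
    apply ContinuousOn.intervalIntegrable
    rw [Set.uIcc_of_le zero_le_one]
    refine ContinuousOn.inv₀ (Continuous.continuousOn (by fun_prop)) ?_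
    intro t ht
    have := ht.1
    positivity
  refine ⟨hi, ?_⟩
  have := intervalIntegral.integral_eq_sub_of_hasDerivAt (a := 0) (b := 1)
    (f := fun t : ℝ => -(t + ρ)⁻¹) (f' := fun t : ℝ => ((t + ρ) ^ 2)⁻¹) ?_ hi
  · rw [this]
    have : 0 < (1 + ρ)⁻¹ := by positivity
    simp only [zero_add, one_div]
    linarith
  · intro t ht
    rw [Set.uIcc_of_le zero_le_one] at ht
    have h0 : t + ρ ≠ 0 := by have := ht.1; positivity
    have := (((hasDerivAt_id t).add_const ρ).inv h0).neg
    convert this using 1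
    · rfl
    · simp [neg_div]

lemma RayData.unif (hd : RayData f p c s) (hg : Good k p z) (hk : 0 < k) {w : ℂ}
    (hw : Good k p w) (hzw : ‖w‖ = ‖z‖) (hz : z ≠ 0) {M : ℝ}
    (hM : ∀ t ∈ Set.Ioc (0:ℝ) 1, ‖f ((t:ℂ) * p)‖ ≤ M) :
    ‖rayI f p z - rayI f p w‖ ≤ 2 / k ^ 2 * M := by
  have hz' : 0 < ‖z‖ := norm_pos_iff.2 hz
  have hM0 : 0 ≤ M := (norm_nonneg _).trans (hM 1 (by simp))
  rw [hd.diff_eq hg hk hw]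
  obtain ⟨hi, hb⟩ := int_inv_sq hz'
  have := intervalIntegral.norm_integral_le_of_norm_le (a := 0) (b := 1) (μ := volume)
    (f := fun t : ℝ => (f ((t:ℂ) * p) / ((t:ℂ) * p - z) * p) * ((z - w) / ((t:ℂ) * p - w)))
    (g := fun t : ℝ => (2 * M * ‖z‖ / k ^ 2) * ((t + ‖z‖) ^ 2)⁻¹) zero_le_one ?_ (hi.const_mul _)
  · refine this.trans ?_
    rw [intervalIntegral.integral_const_mul]
    calc _ ≤ (2 * M * ‖z‖ / k ^ 2) * (1 / ‖z‖) := by gcongr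
      _ = _ := by field_simp
  · refine Filter.Eventually.of_forall fun t ht => ?_
    have ht0 := ht.1
    rw [norm_mul, norm_div]
    have h1 := hd.aux hg hk ht (hM t ht)
    have h2 : ‖z - w‖ / ‖(t:ℂ) * p - w‖ ≤ (2 * ‖z‖) / (k * (t + ‖z‖)) := by
      have h3 := hw t ht
      rw [hzw] at h3
      have h4 : ‖z - w‖ ≤ 2 * ‖z‖ := (norm_sub_le _ _).trans (by rw [hzw]; linarith)
      gcongr
    calc _ ≤ (M / (k * (t + ‖z‖))) * ((2 * ‖z‖) / (k * (t + ‖z‖))) := by gcongr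
      _ = _ := by field_simp

lemma RayData.small (hd : RayData f p c s) (hg : Good k p z) (hk : 0 < k)
    (h0 : Good k p 0) (hz : z ≠ 0) {s' : ℝ} (hs' : 0 < s') (hs1 : s' ≤ 1) (hs2 : s' < s) :
    ‖rayI f p z - rayI f p 0‖ ≤ c / (k ^ 2 * (s - s')) * ‖z‖ ^ s' := by
  have hz' : 0 < ‖z‖ := norm_pos_iff.2 hz
  have hc := hd.hc
  rw [hd.diff_eq hg hk h0]
  have hi : IntervalIntegrable (fun t : ℝ => t ^ (s - s' - 1)) volume 0 1 :=
    intervalIntegral.intervalIntegrable_rpow' (by linarith)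
  have := intervalIntegral.norm_integral_le_of_norm_le (a := 0) (b := 1) (μ := volume)
    (f := fun t : ℝ => (f ((t:ℂ) * p) / ((t:ℂ) * p - z) * p) * ((z - 0) / ((t:ℂ) * p - 0)))
    (g := fun t : ℝ => (c / k ^ 2 * ‖z‖ ^ s') * t ^ (s - s' - 1)) zero_le_one ?_ (hi.const_mul _)
  · refine this.trans ?_
    rw [intervalIntegral.integral_const_mul, integral_rpow (Or.inl (by linarith))]
    have h5 : 0 < s - s' := by linarith
    simp only [sub_add_cancel]
    rw [Real.one_rpow, Real.zero_rpow h5.ne']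
    apply le_of_eq
    field_simp
    simp
  · refine Filter.Eventually.of_forall fun t ht => ?_
    have ht0 := ht.1
    rw [norm_mul, norm_div]
    have h1 := hd.aux hg hk ht (hd.bd t ht)
    have h2 : ‖z - 0‖ / ‖(t:ℂ) * p - 0‖ ≤ ‖z‖ / (k * t) := by
      have h3 := h0 t ht
      rw [norm_zero, add_zero] at h3
      rw [sub_zero z]
      gcongr
    have h6 : ‖z‖ / (t + ‖z‖) ≤ ‖z‖ ^ s' / t ^ s' := by
      have hx : ‖z‖ / (t + ‖z‖) ≤ 1 := by rw [div_le_one (by positivity)]; linarith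
      calc ‖z‖ / (t + ‖z‖) ≤ (‖z‖ / (t + ‖z‖)) ^ s' := by
            conv_lhs => rw [← Real.rpow_one (‖z‖ / (t + ‖z‖))]
            exact Real.rpow_le_rpow_of_exponent_ge (by positivity) hx hs1
        _ ≤ (‖z‖ / t) ^ s' := by
            gcongr
            linarith
        _ = _ := Real.div_rpow hz'.le ht0.le _
    calc _ ≤ (c * t ^ s / (k * (t + ‖z‖))) * (‖z‖ / (k * t)) := by gcongr
      _ = c / k ^ 2 * (t ^ s / t) * (‖z‖ / (t + ‖z‖)) := by field_simp
      _ ≤ c / k ^ 2 * (t ^ s / t) * (‖z‖ ^ s' / t ^ s') := by gcongr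
      _ = _ := by
        rw [Real.rpow_sub_one ht0.ne', Real.rpow_sub ht0]
        field_simp

lemma RayData.diff (hd : RayData f p c s) (hg : Good k p z) (hk : 0 < k) (hz : z ≠ 0) :
    DifferentiableAt ℂ (rayI f p) z := by
  have hz' : 0 < ‖z‖ := norm_pos_iff.2 hz
  set δ := k * ‖z‖ / 2 with hδ
  have hδ0 : 0 < δ := by positivity
  have hlow : ∀ t ∈ Set.Ioc (0:ℝ) 1, ∀ x ∈ Metric.ball z δ, δ ≤ ‖(t:ℂ) * p - x‖ := by
    intro t ht x hx
    have h1 := hg t ht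
    have h2 : ‖x - z‖ < δ := by simpa [dist_eq_norm] using hx
    have h3 : ‖(t:ℂ) * p - z‖ ≤ ‖(t:ℂ) * p - x‖ + ‖x - z‖ := norm_sub_le_norm_sub_add_norm_sub _ _ _
    have h4 : 0 < k * t := mul_pos hk ht.1
    rw [mul_add] at h1
    linarith
  have hc0 : ∀ x ∈ Metric.ball z δ,
      ContinuousOn (fun t : ℝ => f ((t:ℂ) * p) / ((t:ℂ) * p - x) * p) (Set.Ioc 0 1) := by
    intro x hx
    refine (hd.cont.div ?_ ?_).mul continuousOn_const
    · exact Continuous.continuousOn (by fun_prop)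
    · intro t ht
      exact norm_pos_iff.1 (hδ0.trans_le (hlow t ht x hx))
  have hball : Metric.ball z δ ∈ nhds z := Metric.ball_mem_nhds _ hδ0
  have := intervalIntegral.hasDerivAt_integral_of_dominated_loc_of_deriv_le (𝕜 := ℂ) (μ := volume)
    (a := 0) (b := 1) (F := fun x t => f ((t:ℂ) * p) / ((t:ℂ) * p - x) * p)
    (F' := fun x t => f ((t:ℂ) * p) / ((t:ℂ) * p - x) ^ 2 * p) (x₀ := z) (s := Metric.ball z δ)
    (bound := fun _ => c / δ ^ 2) hball ?_ (hd.int hg hk) ?_ ?_ (by simp) ?_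
  · exact this.2.differentiableAt
  · filter_upwards [hball] with x hx
    rw [Set.uIoc_of_le zero_le_one]
    exact (hc0 x hx).aestronglyMeasurable measurableSet_Ioc
  · rw [Set.uIoc_of_le zero_le_one]
    refine ContinuousOn.aestronglyMeasurable ?_ measurableSet_Ioc
    refine (hd.cont.div ?_ ?_).mul continuousOn_const
    · exact Continuous.continuousOn (by fun_prop)
    · intro t ht
      exact pow_ne_zero 2 (hg.ne hk ht)
  · refine Filter.Eventually.of_forall fun t ht x hx => ?_
    rw [Set.uIoc_of_le zero_le_one] at ht
    have hA : ‖f ((t:ℂ) * p)‖ ≤ c := (hd.bd t ht).trans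
      (mul_le_of_le_one_right hd.hc.le (Real.rpow_le_one ht.1.le ht.2 hd.hs.le))
    have hl := hlow t ht x hx
    have hp := hd.hp
    have hc := hd.hc
    rw [norm_mul, norm_div, norm_pow]
    calc _ ≤ c / δ ^ 2 * 1 := by gcongr
      _ = _ := mul_one _
  · refine Filter.Eventually.of_forall fun t ht x hx => ?_
    rw [Set.uIoc_of_le zero_le_one] at ht
    have hne : (t:ℂ) * p - x ≠ 0 := norm_pos_iff.1 (hδ0.trans_le (hlow t ht x hx))
    have h := ((((hasDerivAt_id x).const_sub ((t:ℂ) * p)).inv hne).const_mul (f ((t:ℂ) * p))).mul_const p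
    convert h using 1
    all_goals first | rfl | simp [div_eq_mul_inv]

end

lemma pp_re (β : ℝ) : ((Real.cos β : ℂ) * Complex.exp (I * β)).re = Real.cos β ^ 2 := by
  rw [mul_comm I, Complex.re_ofReal_mul, Complex.exp_ofReal_mul_I_re]; ring

lemma pp_im (β : ℝ) : ((Real.cos β : ℂ) * Complex.exp (I * β)).im = Real.cos β * Real.sin β := by
  rw [mul_comm I, Complex.im_ofReal_mul, Complex.exp_ofReal_mul_I_im]

lemma neg_form (β : ℝ) : -(I * (β:ℂ)) = I * ((-β : ℝ) : ℂ) := by push_cast; ring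

lemma pp_norm {β b : ℝ} (h : 0 ≤ Real.cos β) :
    ‖(Real.cos β : ℂ) * Complex.exp (I * b)‖ = Real.cos β := by
  rw [mul_comm I, norm_mul, Complex.norm_exp_ofReal_mul_I, mul_one, Complex.norm_real,
    Real.norm_of_nonneg h]

lemma pp_mem {β γ : ℝ} (h1 : 0 < β) (h3 : β < γ) (h4 : γ < Real.pi / 2) :
    (Real.cos β : ℂ) * Complex.exp (I * β) ∈ reflStolz γ := by
  apply refl_ball
  have hs : Real.sin β < Real.sin γ :=
    Real.sin_lt_sin_of_lt_of_le_pi_div_two (by linarith) h4.le h3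
  have hs0 : 0 < Real.sin β := Real.sin_pos_of_pos_of_lt_pi h1 (by linarith)
  refine lt_of_le_of_lt (le_of_eq ?_) hs
  rw [Complex.norm_eq_sqrt_sq_add_sq, Complex.sub_re, Complex.sub_im, pp_re, pp_im]
  refine Eq.trans (congrArg Real.sqrt ?_) (Real.sqrt_sq hs0.le)
  simp only [Complex.one_re, Complex.one_im]
  have hc := Real.cos_sq' β
  linear_combination (Real.cos β ^ 2 - 1) * hc

lemma pm_mem {β γ : ℝ} (h1 : 0 < β) (h3 : β < γ) (h4 : γ < Real.pi / 2) :
    (Real.cos β : ℂ) * Complex.exp (-(I * β)) ∈ reflStolz γ := by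
  apply refl_ball
  have hs : Real.sin β < Real.sin γ :=
    Real.sin_lt_sin_of_lt_of_le_pi_div_two (by linarith) h4.le h3
  have hs0 : 0 < Real.sin β := Real.sin_pos_of_pos_of_lt_pi h1 (by linarith)
  refine lt_of_le_of_lt (le_of_eq ?_) hs
  rw [Complex.norm_eq_sqrt_sq_add_sq, Complex.sub_re, Complex.sub_im, neg_form,
    ← Real.cos_neg β, pp_re, pp_im]
  refine Eq.trans (congrArg Real.sqrt ?_) (Real.sqrt_sq hs0.le)
  simp only [Complex.one_re, Complex.one_im, Real.cos_neg, Real.sin_neg]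
  have hc := Real.cos_sq' β
  linear_combination (Real.cos β ^ 2 - 1) * hc

lemma arc_norm {β : ℝ} (hs0 : 0 < Real.sin β) (t : ℝ) :
    ‖(Real.sin β : ℂ) * Complex.exp (I * t)‖ = Real.sin β := by
  rw [mul_comm I, norm_mul, Complex.norm_exp_ofReal_mul_I, mul_one, Complex.norm_real,
    Real.norm_of_nonneg hs0.le]

lemma arc_mem {β γ : ℝ} (h1 : 0 < β) (h3 : β < γ) (h4 : γ < Real.pi / 2) (t : ℝ) :
    1 + (Real.sin β : ℂ) * Complex.exp (I * t) ∈ reflStolz γ := by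
  apply refl_ball
  have hs : Real.sin β < Real.sin γ :=
    Real.sin_lt_sin_of_lt_of_le_pi_div_two (by linarith) h4.le h3
  have hs0 : 0 < Real.sin β := Real.sin_pos_of_pos_of_lt_pi h1 (by linarith)
  rw [sub_add_cancel_left, norm_neg, arc_norm hs0]
  exact hs

lemma arc_end (β : ℝ) : 1 + (Real.sin β : ℂ) * Complex.exp (I * ((Real.pi / 2 + β : ℝ) : ℂ))
    = (Real.cos β : ℂ) * Complex.exp (I * β) := by
  apply Complex.ext
  · rw [pp_re, Complex.add_re, mul_comm I, Complex.re_ofReal_mul, Complex.exp_ofReal_mul_I_re,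
      add_comm (Real.pi / 2), Real.cos_add_pi_div_two, Real.cos_sq']
    simp; ring
  · rw [pp_im, Complex.add_im, mul_comm I, Complex.im_ofReal_mul, Complex.exp_ofReal_mul_I_im,
      add_comm (Real.pi / 2), Real.sin_add_pi_div_two]
    simp; ring

lemma arc_start (β : ℝ) : 1 + (Real.sin β : ℂ) * Complex.exp (I * ((-(Real.pi / 2 + β) : ℝ) : ℂ))
    = (Real.cos β : ℂ) * Complex.exp (-(I * β)) := by
  have h := arc_end (-β)
  rw [neg_form]
  apply Complex.ext
  · rw [← Real.cos_neg β, pp_re, Complex.add_re, mul_comm I, Complex.re_ofReal_mul,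
      Complex.exp_ofReal_mul_I_re, Real.cos_neg,
      add_comm (Real.pi / 2), Real.cos_add_pi_div_two, Real.cos_neg, Real.cos_sq']
    simp; ring
  · rw [← Real.cos_neg β, pp_im, Complex.add_im, mul_comm I, Complex.im_ofReal_mul,
      Complex.exp_ofReal_mul_I_im, Real.sin_neg,
      add_comm (Real.pi / 2), Real.sin_add_pi_div_two, Real.cos_neg, Real.sin_neg]
    simp; ring

lemma norm_sub_neg_ge {l : ℂ} (hl : 0 ≤ l.re) {ρ : ℝ} (hρ : 0 ≤ ρ) :
    ‖l‖ ≤ ‖l - ((-ρ : ℝ) : ℂ)‖ ∧ ρ ≤ ‖l - ((-ρ : ℝ) : ℂ)‖ := by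
  constructor
  · rw [Complex.norm_eq_sqrt_sq_add_sq, Complex.norm_eq_sqrt_sq_add_sq]
    apply Real.sqrt_le_sqrt
    simp
    nlinarith
  · refine le_trans ?_ (Complex.re_le_norm _)
    simp
    exact hl

lemma rayData_of {γ : ℝ} {f : ℂ → ℂ} (hf : DifferentiableOn ℂ f (reflStolz γ)) {c s : ℝ}
    (hc : 0 < c) (hs : 0 < s) (hb : ∀ z ∈ reflStolz γ, ‖f z‖ ≤ c * ‖z‖ ^ s) {p : ℂ}
    (hp : p ∈ reflStolz γ) (hp1 : ‖p‖ ≤ 1) : RayData f p c s where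
  cont := by
    refine hf.continuousOn.comp (Continuous.continuousOn (by fun_prop)) ?_
    intro t ht
    exact refl_ray hp ht
  bd := by
    intro t ht
    refine (hb _ (refl_ray hp ht)).trans ?_
    have : ‖(t:ℂ) * p‖ ≤ t := by
      rw [norm_mul, Complex.norm_real, Real.norm_of_nonneg ht.1.le]
      exact mul_le_of_le_one_right ht.1.le hp1
    gcongr
  hp := hp1
  hc := hc
  hs := hs

lemma ray_primitive {f H : ℂ → ℂ} {γ : ℝ} {p w : ℂ}
    (hH : ∀ a ∈ reflStolz γ, HasDerivAt H (f a / (a - w)) a) (hp : p ∈ reflStolz γ)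
    (hi : IntervalIntegrable (fun t : ℝ => f ((t:ℂ) * p) / ((t:ℂ) * p - w) * p) volume 0 1) :
    Filter.Tendsto (fun ε : ℝ => H p - H ((ε:ℂ) * p)) (nhdsWithin 0 (Set.Ioi 0))
      (nhds (rayI f p w)) := by
  have hi' : IntegrableOn (fun t : ℝ => f ((t:ℂ) * p) / ((t:ℂ) * p - w) * p) (Set.uIcc 0 1) := by
    rw [Set.uIcc_of_le zero_le_one, ← intervalIntegrable_iff_integrableOn_Icc_of_le zero_le_one]
    exact hi
  have h1 := intervalIntegral.continuousOn_primitive_interval_left hi' 0 (by simp)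
  have h2 : Filter.Tendsto (fun ε : ℝ => ∫ t in ε..1, f ((t:ℂ) * p) / ((t:ℂ) * p - w) * p)
      (nhdsWithin 0 (Set.Ioc 0 1)) (nhds (rayI f p w)) := by
    refine h1.tendsto.mono_left (nhdsWithin_mono _ ?_)
    rw [Set.uIcc_of_le zero_le_one]
    exact Set.Ioc_subset_Icc_self
  rw [nhdsWithin_Ioc_eq_nhdsGT zero_lt_one] at h2
  refine h2.congr' ?_
  filter_upwards [Ioc_mem_nhdsGT (zero_lt_one' ℝ)] with ε hε
  have hd : ∀ t ∈ Set.uIcc ε 1, HasDerivAt (fun t : ℝ => H ((t:ℂ) * p))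
      (f ((t:ℂ) * p) / ((t:ℂ) * p - w) * p) t := by
    intro t ht
    rw [Set.uIcc_of_le hε.2] at ht
    have h3 := hH _ (refl_ray hp (t := t) ⟨hε.1.trans_le ht.1, ht.2⟩)
    have h4 : HasDerivAt (fun t : ℝ => (t:ℂ) * p) p t := by
      simpa using (Complex.ofRealCLM.hasDerivAt (x := t)).mul_const p
    exact h3.comp t h4
  rw [intervalIntegral.integral_eq_sub_of_hasDerivAt hd]
  · simp
  · apply hi.mono_set
    rw [Set.uIcc_of_le zero_le_one, Set.uIcc_of_le hε.2]
    exact Set.Icc_subset_Icc_left hε.1.le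

lemma cauchy_zero {β γ : ℝ} (h1 : 0 < β) (h3 : β < γ) (h4 : γ < Real.pi / 2) {f : ℂ → ℂ}
    (hf : DifferentiableOn ℂ f (reflStolz γ)) {c s k : ℝ}
    (hc : 0 < c) (hs : 0 < s) (hb : ∀ z ∈ reflStolz γ, ‖f z‖ ≤ c * ‖z‖ ^ s) {ρ : ℝ} (hρ : 0 ≤ ρ)
    (hk : 0 < k) (hgp : Good k ((Real.cos β : ℂ) * Complex.exp (I * β)) ((-ρ : ℝ) : ℂ))
    (hgm : Good k ((Real.cos β : ℂ) * Complex.exp (-(I * β))) ((-ρ : ℝ) : ℂ)) :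
    F₁ β f ((-ρ : ℝ) : ℂ) + F₂ β f ((-ρ : ℝ) : ℂ) = 0 := by
  have hcos : 0 < Real.cos β := Real.cos_pos_of_mem_Ioo ⟨by linarith, by linarith⟩
  have hP := pp_mem h1 h3 h4
  have hQ := pm_mem h1 h3 h4
  have hPn := pp_norm (b := β) hcos.le
  have hQn := pp_norm (b := -β) hcos.le
  rw [← neg_form] at hQn
  have hPre := pp_re β
  have hQre := pp_re (-β)
  rw [← neg_form, Real.cos_neg] at hQre
  have hend := arc_end β
  have hstart := arc_start β
  have hdP := rayData_of hf hc hs hb hP (by rw [hPn]; exact Real.cos_le_one _)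
  have hdQ := rayData_of hf hc hs hb hQ (by rw [hQn]; exact Real.cos_le_one _)
  rw [F1_eq]
  unfold F₂
  set P := (Real.cos β : ℂ) * Complex.exp (I * β)
  set Q := (Real.cos β : ℂ) * Complex.exp (-(I * β))
  set w : ℂ := ((-ρ : ℝ) : ℂ) with hw
  have hlow : ∀ a ∈ reflStolz γ, ‖a‖ ≤ ‖a - w‖ := fun a ha =>
    (norm_sub_neg_ge (refl_re ha).le hρ).1
  have hne : ∀ a ∈ reflStolz γ, a - w ≠ 0 := by
    intro a ha h
    have h5 := hlow a ha
    rw [h, norm_zero, norm_le_zero_iff] at h5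
    have := refl_re ha
    simp [h5] at this
  have hq : DifferentiableOn ℂ (fun a => f a / (a - w)) (reflStolz γ) :=
    hf.div (by fun_prop) hne
  obtain ⟨H, hH0⟩ := (refl_convex γ).exists_forall_hasDerivWithinAt hq
  have hH : ∀ a ∈ reflStolz γ, HasDerivAt H (f a / (a - w)) a := fun a ha =>
    (hH0 a ha).hasDerivAt ((refl_open γ).mem_nhds ha)
  have tP := ray_primitive hH hP (hdP.int hgp hk)
  have tQ := ray_primitive hH hQ (hdQ.int hgm hk)
  have harc : ∫ t in -(Real.pi / 2 + β)..(Real.pi / 2 + β),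
      f (1 + (Real.sin β : ℂ) * Complex.exp (I * t)) /
        ((1 + (Real.sin β : ℂ) * Complex.exp (I * t)) - w) *
        (I * (Real.sin β : ℂ) * Complex.exp (I * t)) = H P - H Q := by
    rw [← hend, ← hstart]
    refine intervalIntegral.integral_eq_sub_of_hasDerivAt
      (f := fun t : ℝ => H (1 + (Real.sin β : ℂ) * Complex.exp (I * t))) ?_ ?_
    · intro t _
      have h5 := hH _ (arc_mem h1 h3 h4 t)
      have h6 : HasDerivAt (fun t : ℝ => 1 + (Real.sin β : ℂ) * Complex.exp (I * t))
          (I * (Real.sin β : ℂ) * Complex.exp (I * t)) t := by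
        have h7 : HasDerivAt (fun t : ℝ => I * (t:ℂ)) I t := by
          simpa using (Complex.ofRealCLM.hasDerivAt (x := t)).const_mul I
        have h8 := (h7.cexp.const_mul (Real.sin β : ℂ)).const_add 1
        convert h8 using 1
        all_goals first | rfl | ring
      exact h5.comp t h6
    · apply Continuous.intervalIntegrable
      have h5 : Continuous (fun t : ℝ => 1 + (Real.sin β : ℂ) * Complex.exp (I * t)) := by fun_prop
      have h6 : Continuous (fun t : ℝ => f (1 + (Real.sin β : ℂ) * Complex.exp (I * t)) /
        ((1 + (Real.sin β : ℂ) * Complex.exp (I * t)) - w)) :=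
        hq.continuousOn.comp_continuous h5 (arc_mem h1 h3 h4)
      exact h6.mul (by fun_prop)
  rw [harc, ← mul_add]
  have hlim : Filter.Tendsto (fun ε : ℝ => H ((ε:ℂ) * P) - H ((ε:ℂ) * Q))
      (nhdsWithin 0 (Set.Ioi 0)) (nhds 0) := by
    rw [tendsto_zero_iff_norm_tendsto_zero]
    have hb0 : Filter.Tendsto (fun ε : ℝ => 2 * c / Real.cos β ^ 2 * ε ^ s)
        (nhdsWithin 0 (Set.Ioi 0)) (nhds 0) := by
      have : Filter.Tendsto (fun ε : ℝ => 2 * c / Real.cos β ^ 2 * ε ^ s)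
        (nhds 0) (nhds (2 * c / Real.cos β ^ 2 * 0 ^ s)) :=
        ((Real.continuousAt_rpow_const 0 s (Or.inr hs.le)).tendsto).const_mul _
      rw [Real.zero_rpow hs.ne', mul_zero] at this
      exact this.mono_left nhdsWithin_le_nhds
    refine squeeze_zero' (Filter.Eventually.of_forall fun _ => norm_nonneg _) ?_ hb0
    filter_upwards [Ioc_mem_nhdsGT (zero_lt_one' ℝ)] with ε hε
    have hε0 := hε.1
    have hPε := refl_ray hP hε
    have hQε := refl_ray hQ hε
    let S : Set ℂ := (reflStolz γ ∩ {a | ε * Real.cos β ^ 2 ≤ a.re}) ∩ Metric.closedBall 0 ε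
    have hS : Convex ℝ S := ((refl_convex γ).inter (convex_halfSpace_re_ge _)).inter
      (convex_closedBall _ _)
    have hmem : ∀ p ∈ reflStolz γ, (ε:ℂ) * p ∈ reflStolz γ → ‖p‖ = Real.cos β →
        p.re = Real.cos β ^ 2 → (ε:ℂ) * p ∈ S := by
      intro p _ hp2 hp3 hp4
      refine ⟨⟨hp2, ?_⟩, ?_⟩
      · simp [hp4]
      · rw [mem_closedBall_zero_iff, norm_mul, hp3, Complex.norm_real, Real.norm_of_nonneg hε0.le]
        exact mul_le_of_le_one_right hε0.le (Real.cos_le_one _)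
    have hbd : ∀ a ∈ S, ‖f a / (a - w)‖ ≤ c * ε ^ s / (ε * Real.cos β ^ 2) := by
      rintro a ⟨⟨ha1, ha2⟩, ha3⟩
      rw [mem_closedBall_zero_iff] at ha3
      have h5 : ε * Real.cos β ^ 2 ≤ ‖a - w‖ :=
        le_trans ha2 ((Complex.re_le_norm a).trans (hlow a ha1))
      rw [norm_div]
      have h6 : ‖f a‖ ≤ c * ε ^ s := (hb a ha1).trans (by gcongr)
      gcongr
    have hfin := hS.norm_image_sub_le_of_norm_hasDerivWithin_le
      (fun a ha => (hH a ha.1.1).hasDerivWithinAt) hbd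
      (hmem Q hQ hQε hQn hQre) (hmem P hP hPε hPn hPre)
    refine hfin.trans ?_
    have h7 : ‖(ε:ℂ) * P - (ε:ℂ) * Q‖ ≤ 2 * ε := by
      rw [← mul_sub, norm_mul, Complex.norm_real, Real.norm_of_nonneg hε0.le]
      have : ‖P - Q‖ ≤ 2 := (norm_sub_le _ _).trans (by
        rw [hPn, hQn]; linarith [Real.cos_le_one β])
      nlinarith
    calc _ ≤ c * ε ^ s / (ε * Real.cos β ^ 2) * (2 * ε) := by gcongr
      _ = _ := by field_simp
  have hsum := (tQ.sub tP).sub hlim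
  have hconst : (fun ε : ℝ => H Q - H ((ε:ℂ) * Q) - (H P - H ((ε:ℂ) * P)) -
      (H ((ε:ℂ) * P) - H ((ε:ℂ) * Q))) = fun _ => H Q - H P := by
    ext ε; ring
  rw [hconst] at hsum
  have := tendsto_nhds_unique hsum tendsto_const_nhds
  rw [sub_zero] at this
  rw [this]
  ring

lemma norm_const_le : ‖(1 / (2 * Real.pi * I) : ℂ)‖ = 1 / (2 * Real.pi) := by
  rw [norm_div, norm_mul, norm_mul, Complex.norm_I, Complex.norm_real,
    Real.norm_of_nonneg Real.pi_pos.le]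
  simp

lemma norm_const_le_one : ‖(1 / (2 * Real.pi * I) : ℂ)‖ ≤ 1 := by
  rw [norm_const_le, div_le_one (by positivity)]
  linarith [Real.pi_gt_three]

lemma good_sector {θ β : ℝ} (h1 : 0 < θ) (h2 : θ < β) (h4 : β < Real.pi / 2) {z : ℂ}
    (hz : z ∈ sector θ) {b : ℝ} (hb : b = β ∨ b = -β) :
    Good ((1 + 1/Real.sin (β - θ))/Real.cos β + 1/Real.sin (β - θ))⁻¹
      ((Real.cos β : ℂ) * Complex.exp (I * b)) z := by
  intro t ht
  have hcos : 0 < Real.cos β := Real.cos_pos_of_mem_Ioo ⟨by linarith, by linarith⟩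
  have hσ : 0 < Real.sin (β - θ) := Real.sin_pos_of_pos_of_lt_pi (by linarith) (by linarith)
  apply k_of_sigma hσ hcos (pp_norm hcos.le) ht.1.le
  have h := im_bound (t * Real.cos β) b z
  rw [Complex.ofReal_mul] at h
  rw [mul_assoc] at h
  refine le_trans ?_ h
  rw [abs_mul, abs_of_nonneg (norm_nonneg z), mul_comm]
  gcongr
  rcases hb with rfl | rfl
  · rw [← abs_neg, ← Real.sin_neg, neg_sub]
    exact (sin_sub_bound h1 h2 h4 hz.2).trans (le_abs_self _)
  · have := sin_sub_bound h1 h2 h4 (a := -z.arg) (by rw [abs_neg]; exact hz.2)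
    refine this.trans (le_trans (le_of_eq ?_) (le_abs_self _))
    congr 1; ring

lemma good_neg {θ β : ℝ} (h1 : 0 < θ) (h2 : θ < β) (h4 : β < Real.pi / 2) {ρ : ℝ}
    (hρ : 0 ≤ ρ) {b : ℝ} (hb : b = β ∨ b = -β) :
    Good ((1 + 1/Real.sin (β - θ))/Real.cos β + 1/Real.sin (β - θ))⁻¹
      ((Real.cos β : ℂ) * Complex.exp (I * b)) ((-ρ : ℝ) : ℂ) := by
  intro t ht
  have hcos : 0 < Real.cos β := Real.cos_pos_of_mem_Ioo ⟨by linarith, by linarith⟩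
  have hσ : 0 < Real.sin (β - θ) := Real.sin_pos_of_pos_of_lt_pi (by linarith) (by linarith)
  apply k_of_sigma hσ hcos (pp_norm hcos.le) ht.1.le
  have hre : ((Real.cos β : ℂ) * Complex.exp (I * b)).re = Real.cos β ^ 2 := by
    rcases hb with rfl | rfl
    · exact pp_re _
    · rw [← Real.cos_neg β]; exact pp_re _
  have h := (norm_sub_neg_ge (l := (t:ℂ) * ((Real.cos β : ℂ) * Complex.exp (I * b))) (by
    rw [Complex.re_ofReal_mul, hre]; have := ht.1; positivity) hρ).2
  refine le_trans ?_ h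
  rw [Complex.norm_real, norm_neg, Real.norm_of_nonneg hρ]
  exact mul_le_of_le_one_left hρ (Real.sin_le_one _)

lemma F2_bound {β γ : ℝ} (h1 : 0 < β) (h3 : β < γ) (h4 : γ < Real.pi / 2) {f : ℂ → ℂ} {M : ℝ}
    (hM : ∀ z ∈ reflStolz γ, ‖f z‖ ≤ M) {ρ : ℝ} (hρ : 0 ≤ ρ) :
    ‖F₂ β f ((-ρ : ℝ) : ℂ)‖ ≤ 1 / (1 - Real.sin β) * M := by
  have hs0 : 0 < Real.sin β := Real.sin_pos_of_pos_of_lt_pi h1 (by linarith)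
  have hs1 : Real.sin β < 1 := by
    rw [← Real.sin_pi_div_two]
    exact Real.sin_lt_sin_of_lt_of_le_pi_div_two (by linarith) le_rfl (by linarith)
  have hM0 : 0 ≤ M := (norm_nonneg _).trans (hM _ (arc_mem h1 h3 h4 0))
  have h5 : 0 < 1 - Real.sin β := by linarith
  unfold F₂
  rw [norm_mul, norm_const_le]
  have := intervalIntegral.norm_integral_le_of_norm_le_const (a := -(Real.pi / 2 + β))
    (b := Real.pi / 2 + β) (C := M / (1 - Real.sin β))
    (f := fun t : ℝ => f (1 + (Real.sin β : ℂ) * Complex.exp (I * t)) /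
        ((1 + (Real.sin β : ℂ) * Complex.exp (I * t)) - ((-ρ : ℝ) : ℂ)) *
        (I * (Real.sin β : ℂ) * Complex.exp (I * t))) ?_
  · have habs : |Real.pi / 2 + β - -(Real.pi / 2 + β)| ≤ 2 * Real.pi := by
      rw [abs_of_nonneg (by linarith [Real.pi_pos])]
      linarith
    calc _ ≤ 1 / (2 * Real.pi) * (M / (1 - Real.sin β) * (2 * Real.pi)) := by
          gcongr
          refine this.trans ?_
          gcongr
      _ = _ := by
        have := Real.pi_pos
        field_simp
  · intro t _
    have hm := arc_mem h1 h3 h4 t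
    have hl := (norm_sub_neg_ge (refl_re hm).le hρ).1
    have hl2 : 1 - Real.sin β ≤ ‖1 + (Real.sin β : ℂ) * Complex.exp (I * t)‖ := by
      have := norm_sub_le (1 + (Real.sin β : ℂ) * Complex.exp (I * t))
        ((Real.sin β : ℂ) * Complex.exp (I * t))
      rw [arc_norm hs0, add_sub_cancel_right, norm_one] at this
      linarith
    have hl3 := hl2.trans hl
    have hfm := hM _ hm
    rw [norm_mul, norm_div, mul_assoc I, norm_mul I, Complex.norm_I, arc_norm hs0, one_mul]
    calc _ ≤ M / (1 - Real.sin β) * 1 := by gcongr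
      _ = _ := mul_one _
/-- Single-variable transfer lemma: for `0 < θ < β₁ < γ₁ < π/2` and `f` holomorphic and
bounded on `Δ_{γ₁}` with `|f(z)| ≤ c|z|^s`, the function `g = F₁ + F₂(0)/(1+·)` is
holomorphic on `Σ_θ`, lies in `H₀^∞(Σ_θ)` (i.e. has the decay
`|g(z)| ≤ c₂|z|^{s'}/(1+|z|^{2s'})`), and `‖g‖_{∞,Σ_θ} ≤ C‖f‖_{∞,Δ_{γ₁}}` with `C`
independent of `f`. -/
theorem stmt5 (θ β₁ γ₁ : ℝ) (h1 : 0 < θ) (h2 : θ < β₁) (h3 : β₁ < γ₁)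
    (h4 : γ₁ < Real.pi / 2) :
    ∃ C > (0:ℝ), ∀ f : ℂ → ℂ, DifferentiableOn ℂ f (reflStolz γ₁) →
      ∀ c s : ℝ, 0 < c → 0 < s → (∀ z ∈ reflStolz γ₁, ‖f z‖ ≤ c * ‖z‖ ^ s) →
        DifferentiableOn ℂ (gAux β₁ f) (sector θ) ∧
        (∃ c₂ > (0:ℝ), ∃ s' > (0:ℝ), ∀ z ∈ sector θ,
          ‖gAux β₁ f z‖ ≤ c₂ * ‖z‖ ^ s' / (1 + ‖z‖ ^ (2 * s'))) ∧
        (∀ M : ℝ, (∀ z ∈ reflStolz γ₁, ‖f z‖ ≤ M) →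
          ∀ z ∈ sector θ, ‖gAux β₁ f z‖ ≤ C * M) := by
  have hβ0 : 0 < β₁ := h1.trans h2
  have hβ2 : β₁ < Real.pi / 2 := h3.trans h4
  have hcos : 0 < Real.cos β₁ := Real.cos_pos_of_mem_Ioo ⟨by linarith, by linarith⟩
  have hσ : 0 < Real.sin (β₁ - θ) := Real.sin_pos_of_pos_of_lt_pi (by linarith) (by linarith)
  have hs1 : Real.sin β₁ < 1 := by
    rw [← Real.sin_pi_div_two]
    exact Real.sin_lt_sin_of_lt_of_le_pi_div_two (by linarith) le_rfl (by linarith)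
  have gsP : ∀ z ∈ sector θ, _ := fun z hz => good_sector h1 h2 hβ2 hz (Or.inl rfl)
  have gsQ : ∀ z ∈ sector θ, _ := fun z hz => good_sector h1 h2 hβ2 hz (Or.inr rfl)
  have gnP : ∀ ρ : ℝ, 0 ≤ ρ → _ := fun ρ hρ => good_neg h1 h2 hβ2 hρ (Or.inl rfl)
  have gnQ : ∀ ρ : ℝ, 0 ≤ ρ → _ := fun ρ hρ => good_neg h1 h2 hβ2 hρ (Or.inr rfl)
  have hk : 0 < ((1 + 1/Real.sin (β₁ - θ))/Real.cos β₁ + 1/Real.sin (β₁ - θ))⁻¹ := by positivity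
  set k := ((1 + 1/Real.sin (β₁ - θ))/Real.cos β₁ + 1/Real.sin (β₁ - θ))⁻¹
  rw [← neg_form] at gsQ gnQ
  have hD : 0 < 1 / (1 - Real.sin β₁) := by
    have : 0 < 1 - Real.sin β₁ := by linarith
    positivity
  have hone : ∀ z ∈ sector θ, 1 ≤ ‖1 + z‖ ∧ ‖z‖ ≤ ‖1 + z‖ := by
    intro z hz
    have hre : 0 ≤ z.re := Complex.abs_arg_le_pi_div_two_iff.1 (by linarith [hz.2])
    have h := norm_sub_neg_ge hre zero_le_one
    have h5 : z - ((-1 : ℝ) : ℂ) = 1 + z := by push_cast; ring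
    rw [h5] at h
    exact ⟨h.2, h.1⟩
  refine ⟨4 / k ^ 2 + 2 * (1 / (1 - Real.sin β₁)), by positivity, ?_⟩
  intro f hf c s hc hs hb
  have hP := pp_mem hβ0 h3 h4
  have hQ := pm_mem hβ0 h3 h4
  have hPn := pp_norm (b := β₁) hcos.le
  have hQn := pp_norm (b := -β₁) hcos.le
  rw [← neg_form] at hQn
  have hdP := rayData_of hf hc hs hb hP (by rw [hPn]; exact Real.cos_le_one _)
  have hdQ := rayData_of hf hc hs hb hQ (by rw [hQn]; exact Real.cos_le_one _)
  have hcau : ∀ ρ : ℝ, 0 ≤ ρ → F₁ β₁ f ((-ρ : ℝ) : ℂ) + F₂ β₁ f ((-ρ : ℝ) : ℂ) = 0 :=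
    fun ρ hρ => cauchy_zero hβ0 h3 h4 hf hc hs hb hρ hk (gnP ρ hρ) (gnQ ρ hρ)
  have hF1 : ∀ z, F₁ β₁ f z = _ := fun z => F1_eq β₁ f z
  set P := (Real.cos β₁ : ℂ) * Complex.exp (I * β₁)
  set Q := (Real.cos β₁ : ℂ) * Complex.exp (-(I * β₁))
  have hF1d : ∀ z w, ‖F₁ β₁ f z - F₁ β₁ f w‖ ≤
      ‖rayI f Q z - rayI f Q w‖ + ‖rayI f P z - rayI f P w‖ := by
    intro z w
    rw [hF1, hF1, ← mul_sub, norm_mul]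
    have e : rayI f Q z - rayI f P z - (rayI f Q w - rayI f P w) =
      (rayI f Q z - rayI f Q w) - (rayI f P z - rayI f P w) := by ring
    rw [e]
    exact (mul_le_of_le_one_left (norm_nonneg _) norm_const_le_one).trans (norm_sub_le _ _)
  refine ⟨?_, ?_, ?_⟩
  · intro z hz
    apply DifferentiableAt.differentiableWithinAt
    have e1 : gAux β₁ f = fun z => (1 / (2 * Real.pi * I)) * (rayI f Q z - rayI f P z)
        + F₂ β₁ f 0 / (1 + z) := by
      ext z
      unfold gAux
      rw [hF1]
    rw [e1]
    have hne : 1 + z ≠ 0 := norm_pos_iff.1 (zero_lt_one.trans_le (hone z hz).1)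
    have d1 := (hdQ.diff (gsQ z hz) hk hz.1).sub (hdP.diff (gsP z hz) hk hz.1)
    refine (d1.const_mul _).add (DifferentiableAt.div (by fun_prop) (by fun_prop) hne)
  · have hs'0 : 0 < min s 1 / 2 := by have := lt_min hs zero_lt_one; positivity
    have hs'1 : min s 1 / 2 ≤ 1 := by have := min_le_right s 1; linarith
    have hs'2 : min s 1 / 2 < s := by have := min_le_left s 1; linarith
    set s' := min s 1 / 2
    set A := 2 * (c / (k ^ 2 * (s - s')))
    set B := 2 * (c / k)
    set E := ‖F₂ β₁ f 0‖
    have hss : 0 < s - s' := by linarith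
    have hA : 0 < A := by positivity
    have hB : 0 < B := by positivity
    have hE : 0 ≤ E := norm_nonneg _
    refine ⟨2 * (A + B + E), by positivity, s', hs'0, ?_⟩
    intro z hz
    have hz0 : 0 < ‖z‖ := norm_pos_iff.2 hz.1
    obtain ⟨ho1, ho2⟩ := hone z hz
    have hx : 0 < ‖z‖ ^ s' := Real.rpow_pos_of_pos hz0 _
    have hx2 : ‖z‖ ^ (2 * s') = ‖z‖ ^ s' * ‖z‖ ^ s' := by
      rw [two_mul, Real.rpow_add hz0]
    rw [hx2, le_div_iff₀ (by positivity)]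
    rcases le_total ‖z‖ 1 with hz1 | hz1
    · have hx1 : ‖z‖ ^ s' ≤ 1 := Real.rpow_le_one hz0.le hz1 hs'0.le
      have hzx : ‖z‖ ≤ ‖z‖ ^ s' := by
        conv_lhs => rw [← Real.rpow_one ‖z‖]
        exact Real.rpow_le_rpow_of_exponent_ge hz0 hz1 hs'1
      have c0 := hcau 0 le_rfl
      have gP0 := gnP 0 le_rfl
      have gQ0 := gnQ 0 le_rfl
      simp only [neg_zero, Complex.ofReal_zero] at c0 gP0 gQ0
      have bP := hdP.small (gsP z hz) hk gP0 hz.1 hs'0 hs'1 hs'2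
      have bQ := hdQ.small (gsQ z hz) hk gQ0 hz.1 hs'0 hs'1 hs'2
      have hne : 1 + z ≠ 0 := norm_pos_iff.1 (zero_lt_one.trans_le ho1)
      have e : gAux β₁ f z = (F₁ β₁ f z - F₁ β₁ f 0) - F₂ β₁ f 0 * (z / (1 + z)) := by
        unfold gAux
        field_simp
        linear_combination (1 + z) * c0
      have b1 : ‖F₂ β₁ f 0 * (z / (1 + z))‖ ≤ E * ‖z‖ ^ s' := by
        rw [norm_mul, norm_div]
        have : ‖z‖ / ‖1 + z‖ ≤ ‖z‖ ^ s' := (div_le_self hz0.le ho1).trans hzx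
        gcongr
      have b2 : ‖gAux β₁ f z‖ ≤ (A + E) * ‖z‖ ^ s' := by
        rw [e]
        refine (norm_sub_le _ _).trans ?_
        have := hF1d z 0
        have hAe : A * ‖z‖ ^ s' = c / (k ^ 2 * (s - s')) * ‖z‖ ^ s' +
          c / (k ^ 2 * (s - s')) * ‖z‖ ^ s' := by simp only [A]; ring
        linarith
      have b3 : ‖gAux β₁ f z‖ ≤ (A + B + E) * ‖z‖ ^ s' := b2.trans (by gcongr; linarith)
      have b4 : 1 + ‖z‖ ^ s' * ‖z‖ ^ s' ≤ 2 := by nlinarith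
      calc _ ≤ (A + B + E) * ‖z‖ ^ s' * 2 := by gcongr
        _ = _ := by ring
    · have hx1 : 1 ≤ ‖z‖ ^ s' := Real.one_le_rpow hz1 hs'0.le
      have hzx : ‖z‖ ^ s' ≤ ‖z‖ := by
        conv_rhs => rw [← Real.rpow_one ‖z‖]
        exact Real.rpow_le_rpow_of_exponent_le hz1 hs'1
      have bP := hdP.large (gsP z hz) hk hz.1
      have bQ := hdQ.large (gsQ z hz) hk hz.1
      have b1 : ‖F₁ β₁ f z‖ ≤ B / ‖z‖ := by
        rw [hF1, norm_mul]
        refine (mul_le_of_le_one_left (norm_nonneg _) norm_const_le_one).trans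
          ((norm_sub_le _ _).trans ((add_le_add bQ bP).trans (le_of_eq ?_)))
        simp only [B]
        field_simp
        ring
      have b2 : ‖F₂ β₁ f 0 / (1 + z)‖ ≤ E / ‖z‖ := by
        rw [norm_div]
        gcongr
      have b3 : ‖gAux β₁ f z‖ ≤ (A + B + E) / ‖z‖ ^ s' := by
        calc ‖gAux β₁ f z‖ ≤ B / ‖z‖ + E / ‖z‖ := (norm_add_le _ _).trans (add_le_add b1 b2)
          _ = (B + E) / ‖z‖ := by ring
          _ ≤ (A + B + E) / ‖z‖ ^ s' := by
            gcongr
            linarith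
      have b4 : 1 + ‖z‖ ^ s' * ‖z‖ ^ s' ≤ 2 * (‖z‖ ^ s' * ‖z‖ ^ s') := by nlinarith
      calc _ ≤ (A + B + E) / ‖z‖ ^ s' * (2 * (‖z‖ ^ s' * ‖z‖ ^ s')) := by gcongr
        _ = _ := by field_simp
  · intro M hM z hz
    have hz0 : 0 < ‖z‖ := norm_pos_iff.2 hz.1
    obtain ⟨ho1, ho2⟩ := hone z hz
    have hM0 : 0 ≤ M := (norm_nonneg _).trans (hM _ hP)
    have hwn : ‖((-‖z‖ : ℝ) : ℂ)‖ = ‖z‖ := by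
      rw [Complex.norm_real, norm_neg, norm_norm]
    have uP := hdP.unif (gsP z hz) hk (gnP ‖z‖ hz0.le) hwn hz.1
      (M := M) (fun t ht => hM _ (refl_ray hP ht))
    have uQ := hdQ.unif (gsQ z hz) hk (gnQ ‖z‖ hz0.le) hwn hz.1
      (M := M) (fun t ht => hM _ (refl_ray hQ ht))
    have c1 := hcau ‖z‖ hz0.le
    have f1 := F2_bound hβ0 h3 h4 hM hz0.le
    have f0 := F2_bound hβ0 h3 h4 hM le_rfl
    simp only [neg_zero, Complex.ofReal_zero] at f0
    have d1 := hF1d z ((-‖z‖ : ℝ) : ℂ)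
    have e : gAux β₁ f z = (F₁ β₁ f z - F₁ β₁ f ((-‖z‖ : ℝ) : ℂ)) - F₂ β₁ f ((-‖z‖ : ℝ) : ℂ)
        + F₂ β₁ f 0 / (1 + z) := by
      unfold gAux
      linear_combination c1
    have f2 : ‖F₂ β₁ f 0 / (1 + z)‖ ≤ 1 / (1 - Real.sin β₁) * M := by
      rw [norm_div]
      exact (div_le_self (norm_nonneg _) ho1).trans f0
    rw [e]
    refine (norm_add_le _ _).trans ?_
    have n1 := norm_sub_le (F₁ β₁ f z - F₁ β₁ f ((-‖z‖ : ℝ) : ℂ)) (F₂ β₁ f ((-‖z‖ : ℝ) : ℂ))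
    have er : (4 / k ^ 2 + 2 * (1 / (1 - Real.sin β₁))) * M =
      2 / k ^ 2 * M + 2 / k ^ 2 * M + 1 / (1 - Real.sin β₁) * M + 1 / (1 - Real.sin β₁) * M := by
      ring
    linarith
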